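/- Let K be an algebraically closed field of characteristic 0 and let V ⊆ (Kˣ)ⁿ be a free irreducible variety. Then there exist a Kummer generic irreducible variety V' ⊆ (Kˣ)ⁿ and a correspondence torus T ⊆ (Kˣ)ⁿ × (Kˣ)ⁿ such that T induces a toric correspondence between V' and V. In fact, there is N ≥ 1 such that one can take V' to be any irreducible component of √[N]{V} and T = {(x, y) ∈ (Kˣ)ⁿ × (Kˣ)ⁿ : yᵢ = xᵢ^N for all i}. -/

import Mathlib

namespace BadFields

variable (K : Type) [Field K]

/-- The divisible hull `⟨A⟩` of a subset `A ⊆ Kˣ`: all `x` with `x ^ k` in the subgroup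
generated by `A` for some `k ≥ 1`.  Note that `⟨∅⟩` is exactly the group of roots of unity. -/
def divHull (A : Set Kˣ) : Subgroup Kˣ where
  carrier := {x | ∃ k : ℕ, k ≠ 0 ∧ x ^ k ∈ Subgroup.closure A}
  one_mem' := ⟨1, one_ne_zero, by simpa using Subgroup.one_mem _⟩
  mul_mem' := by
    rintro x y ⟨k, hk, hx⟩ ⟨l, hl, hy⟩
    refine ⟨k * l, mul_ne_zero hk hl, ?_⟩
    rw [mul_pow]
    exact Subgroup.mul_mem _ (by rw [pow_mul]; exact Subgroup.pow_mem _ hx l)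
      (by rw [mul_comm k l, pow_mul]; exact Subgroup.pow_mem _ hy k)
  inv_mem' := by
    rintro x ⟨k, hk, hx⟩
    exact ⟨k, hk, by rw [inv_pow]; exact Subgroup.inv_mem _ hx⟩

/-- A subgroup `U` of `Kˣ` is divisible if every element has `k`-th roots in `U` for all
`k ≥ 1`. -/
def DivisibleSub (U : Subgroup Kˣ) : Prop :=
  ∀ u ∈ U, ∀ k : ℕ, k ≠ 0 → ∃ v ∈ U, v ^ k = u

/-- The lattice of multiplicative relations of the tuple `y` modulo the divisible hull of `A`.
Since `Kˣ/⟨A⟩` is torsion-free, this lattice is saturated, and the dimension of the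
`ℚ`-subspace of `Kˣ/Tor` spanned by (the images of) `y` over (the image of) `A` equals
`n` minus the rank of this lattice. -/
def relLattice (A : Set Kˣ) {n : ℕ} (y : Fin n → Kˣ) : Submodule ℤ (Fin n → ℤ) where
  carrier := {c | (∏ i, y i ^ c i) ∈ divHull K A}
  zero_mem' := by simpa using Subgroup.one_mem _
  add_mem' := by
    intro c d hc hd
    have h : (∏ i, y i ^ (c + d) i) = (∏ i, y i ^ c i) * ∏ i, y i ^ d i := by
      rw [← Finset.prod_mul_distrib]
      exact Finset.prod_congr rfl fun i _ => by rw [Pi.add_apply, zpow_add]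
    show (∏ i, y i ^ (c + d) i) ∈ divHull K A
    rw [h]
    exact Subgroup.mul_mem _ hc hd
  smul_mem' := by
    intro m c hc
    have h : (∏ i, y i ^ (m • c) i) = (∏ i, y i ^ c i) ^ m := by
      rw [← Finset.prod_zpow]
      exact Finset.prod_congr rfl fun i _ => by
        rw [Pi.smul_apply, smul_eq_mul, mul_comm, zpow_mul]
    show (∏ i, y i ^ (m • c) i) ∈ divHull K A
    rw [h]
    exact Subgroup.zpow_mem _ hc m

/-- `ldimRel K A y` is the linear dimension `ldim(y/A)`: the dimension of the `ℚ`-subspace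
spanned by the images of the coordinates of `y` in `Kˣ/Tor` over the subspace spanned by the
image of `A`. -/
noncomputable def ldimRel (A : Set Kˣ) {n : ℕ} (y : Fin n → Kˣ) : ℕ :=
  n - Module.finrank ℤ (relLattice K A y)

/-- The (absolute) linear dimension `ldim(y)`. -/
noncomputable def ldim {n : ℕ} (y : Fin n → Kˣ) : ℕ := ldimRel K ∅ y

/-- `trdegOver K F s` : the transcendence degree over the subfield `F` of the field generated
by `F` and the set `s`, i.e. the maximal cardinality of a finite subset of `s` which is
algebraically independent over `F`. -/
noncomputable def trdegOver (F : Subfield K) (s : Set K) : ℕ :=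
  sSup {d | ∃ t : Finset K, ↑t ⊆ s ∧ t.card = d ∧
    AlgebraicIndependent F (fun x : {y : K // y ∈ t} => (x : K))}

/-- Transcendence degree over the prime field; in characteristic zero this is
`trdeg(ℚ(s)/ℚ)`. -/
noncomputable def trdegQ (s : Set K) : ℕ := trdegOver K ⊥ s

section Var

variable {ι : Type} [Fintype ι]

/-- The subset of the torus `(Kˣ)^ι` cut out by a set of polynomials. -/
def zeroSet (S : Set (MvPolynomial ι K)) : Set (ι → Kˣ) :=
  {x | ∀ p ∈ S, MvPolynomial.eval (fun i => (x i : K)) p = 0}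

/-- Zariski closed subsets of the torus `(Kˣ)^ι` (closed subvarieties). -/
def IsZClosed (V : Set (ι → Kˣ)) : Prop := ∃ S, V = zeroSet K S

/-- Zariski closed subsets of `(Kˣ)^ι` defined by polynomials all of whose coefficients lie
in `E`; for `E = ↑(⊥ : Subfield K)` (the prime field, i.e. `ℚ` in characteristic `0`) this
means defined over `ℚ`. -/
def IsClosedOver (E : Set K) (V : Set (ι → Kˣ)) : Prop :=
  ∃ S : Set (MvPolynomial ι K),
    (∀ p ∈ S, ∀ m, MvPolynomial.coeff m p ∈ E) ∧ V = zeroSet K S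

/-- Irreducible (nonempty) Zariski closed subsets of the torus `(Kˣ)^ι`. -/
def IsIrredVar (V : Set (ι → Kˣ)) : Prop :=
  IsZClosed K V ∧ V.Nonempty ∧
    ∀ C₁ C₂ : Set (ι → Kˣ), IsZClosed K C₁ → IsZClosed K C₂ →
      V ⊆ C₁ ∪ C₂ → V ⊆ C₁ ∨ V ⊆ C₂

/-- The Zariski closure in `(Kˣ)^ι`. -/
def zcl (S : Set (ι → Kˣ)) : Set (ι → Kˣ) := ⋂₀ {C | IsZClosed K C ∧ S ⊆ C}

/-- The locus of a point `b` over the set of constants `E`: the smallest Zariski closed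
set containing `b` defined by polynomials with coefficients in `E`. -/
def locusOver (E : Set K) (b : ι → Kˣ) : Set (ι → Kˣ) :=
  ⋂₀ {C | IsClosedOver K E C ∧ b ∈ C}

/-- The dimension of a (not necessarily irreducible) Zariski closed subset of `(Kˣ)^ι`:
the supremum of the lengths of strict chains of irreducible closed subsets. -/
noncomputable def vdim (V : Set (ι → Kˣ)) : ℕ :=
  sSup {d | ∃ W : Fin (d + 1) → Set (ι → Kˣ),
    (∀ i, IsIrredVar K (W i) ∧ W i ⊆ V) ∧ StrictMono W}

/-- The monomial map `y ↦ y^M` attached to an integer matrix `M`. -/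
def mpow {k : ℕ} (M : Matrix (Fin k) ι ℤ) (y : ι → Kˣ) : Fin k → Kˣ :=
  fun j => ∏ i, y i ^ M j i

/-- Algebraic subgroups of the torus `(Kˣ)^ι`: subgroups defined by finitely many monomial
equations `y^M = 1`. -/
def IsAlgSubgroup (H : Set (ι → Kˣ)) : Prop :=
  ∃ (k : ℕ) (M : Matrix (Fin k) ι ℤ), H = {y | mpow K M y = 1}

/-- Subtori of `(Kˣ)^ι`: irreducible algebraic subgroups. -/
def IsSubtorus (T : Set (ι → Kˣ)) : Prop := IsAlgSubgroup K T ∧ IsIrredVar K T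

/-- The coset `c · T` (multiplication coordinatewise). -/
def coset (c : ι → Kˣ) (T : Set (ι → Kˣ)) : Set (ι → Kˣ) := (fun t => c * t) '' T

/-- A variety is free if it is not contained in a coset of a proper subtorus. -/
def IsFree (V : Set (ι → Kˣ)) : Prop :=
  ¬ ∃ T c, IsSubtorus K T ∧ T ≠ Set.univ ∧ V ⊆ coset K c T

/-- `T` is the minimal torus of `V`: the smallest subtorus such that `V` is contained in some
coset of it. -/
def IsMinTorus (V T : Set (ι → Kˣ)) : Prop :=
  IsSubtorus K T ∧ (∃ c, V ⊆ coset K c T) ∧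
    ∀ T', IsSubtorus K T' → (∃ c, V ⊆ coset K c T') → T ⊆ T'

/-- The codimension `cd(V) = dim(minimal torus of V) - dim V`. -/
noncomputable def cd (V : Set (ι → Kˣ)) : ℕ :=
  sInf {d | ∃ T c, IsSubtorus K T ∧ V ⊆ coset K c T ∧ d = vdim K T} - vdim K V

/-- `S` is cd-maximal in `W`. -/
def CdMaximal (S W : Set (ι → Kˣ)) : Prop :=
  IsIrredVar K S ∧ S ⊆ W ∧
    ∀ S', IsIrredVar K S' → S ⊂ S' → S' ⊆ W → cd K S < cd K S'

/-- `√[m]{V}`, the preimage of `V` under coordinatewise `m`-th powers. -/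
def mroot (m : ℕ) (V : Set (ι → Kˣ)) : Set (ι → Kˣ) := {a | (fun i => a i ^ m) ∈ V}

/-- An irreducible variety `V` is Kummer generic if `√[m]{V}` is irreducible for all `m ≥ 1`. -/
def KummerGeneric (V : Set (ι → Kˣ)) : Prop :=
  IsIrredVar K V ∧ ∀ m : ℕ, 1 ≤ m → IsIrredVar K (mroot K m V)

/-- Irreducible components of a set `S`: maximal irreducible closed subsets of `S`. -/
def IsIrredComponent (V' S : Set (ι → Kˣ)) : Prop :=
  IsIrredVar K V' ∧ V' ⊆ S ∧ ∀ W, IsIrredVar K W → V' ⊆ W → W ⊆ S → W = V'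

end Var

/-- A correspondence torus: an `n`-dimensional subtorus of `(Kˣ)ⁿ × (Kˣ)ⁿ` which projects
onto `(Kˣ)ⁿ` in both coordinates.  We identify `(Kˣ)ⁿ × (Kˣ)ⁿ` with `(Kˣ)^(Fin n ⊕ Fin n)`,
a pair `(x, y)` corresponding to `Sum.elim x y`. -/
def IsCorrTorus {n : ℕ} (T : Set ((Fin n ⊕ Fin n) → Kˣ)) : Prop :=
  IsSubtorus K T ∧ vdim K T = n ∧
    (∀ x : Fin n → Kˣ, ∃ y, Sum.elim x y ∈ T) ∧
    (∀ y : Fin n → Kˣ, ∃ x, Sum.elim x y ∈ T)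

/-- `T` induces a toric correspondence between `V` and `V'`: the Zariski closures of the two
projections of `(V × V') ∩ T` are `V` and `V'` respectively. -/
def ToricCorr {n : ℕ} (T : Set ((Fin n ⊕ Fin n) → Kˣ)) (V V' : Set (Fin n → Kˣ)) : Prop :=
  zcl K ((fun p => p ∘ Sum.inl) '' {p | p ∈ T ∧ (p ∘ Sum.inl) ∈ V ∧ (p ∘ Sum.inr) ∈ V'}) = V ∧
  zcl K ((fun p => p ∘ Sum.inr) '' {p | p ∈ T ∧ (p ∘ Sum.inl) ∈ V ∧ (p ∘ Sum.inr) ∈ V'}) = V'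

/-- The set of elements of `K` underlying a set of units. -/
def unitSet (A : Set Kˣ) : Set K := (fun u : Kˣ => (u : K)) '' A

/-- `trdeg(y/A)`, the transcendence degree of `ℚ(A ∪ y)` over `ℚ(A)`. -/
noncomputable def trdegRel (A : Set Kˣ) {n : ℕ} (y : Fin n → Kˣ) : ℕ :=
  trdegOver K (Subfield.closure (unitSet K A)) (Set.range fun i => (y i : K))

/-- The predimension `δ(y/A) = 2 trdeg(y/A) - ldim(y/A)`. -/
noncomputable def pdelta (A : Set Kˣ) {n : ℕ} (y : Fin n → Kˣ) : ℤ :=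
  2 * (trdegRel K A y : ℤ) - (ldimRel K A y : ℤ)

/-- The extension `⟨A ∪ b⟩/A` is minimal prealgebraic of length `n`. -/
def MinPrealg {n : ℕ} (A : Set Kˣ) (b : Fin n → Kˣ) : Prop :=
  2 ≤ n ∧ ldimRel K A b = n ∧ pdelta K A b = 0 ∧
    ∀ B' : Set Kˣ, B' = ↑(divHull K B') → A ⊂ B' → B' ⊂ ↑(divHull K (A ∪ Set.range b)) →
      pdelta K B' b < 0

end BadFields


lemma exists_val_aux {A L F : Type*} [CommRing A] [IsDedekindDomain A] [Field L] [Algebra A L]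
    [IsFractionRing A L] [CharZero L] [Field F] [Algebra L F] [Algebra A F] [IsScalarTower A L F]
    [FiniteDimensional L F] (a : A) (ha : a ≠ 0) (hu : ¬ IsUnit a) :
    ∃ v : Fˣ →* Multiplicative ℤ, ∀ u : Fˣ, (u : F) = algebraMap A F a → v u ≠ 1 := by
  have : IsDedekindDomain (integralClosure A F) := integralClosure.isDedekindDomain A L F
  have : IsFractionRing (integralClosure A F) F :=
    integralClosure.isFractionRing_of_finite_extension L F
  have hinjF : Function.Injective (algebraMap A F) := by
    rw [IsScalarTower.algebraMap_eq A L F]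
    exact (algebraMap L F).injective.comp (IsFractionRing.injective A L)
  have hinj : Function.Injective (algebraMap A (integralClosure A F)) := by
    intro x y h
    apply hinjF
    rw [IsScalarTower.algebraMap_apply A (integralClosure A F) F, h,
      ← IsScalarTower.algebraMap_apply A (integralClosure A F) F]
  have hfaith : FaithfulSMul A (integralClosure A F) := (faithfulSMul_iff_algebraMap_injective _ _).mpr hinj
  obtain ⟨p, hp, hap⟩ := exists_max_ideal_of_mem_nonunits hu
  obtain ⟨Q, hQ, hQp⟩ := Ideal.exists_maximal_ideal_liesOver_of_isIntegral (S := integralClosure A F) p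
  have hmem : algebraMap A (integralClosure A F) a ∈ Q := by
    have := hQp.over
    rw [this] at hap
    exact hap
  let P : IsDedekindDomain.HeightOneSpectrum (integralClosure A F) :=
    ⟨Q, hQ.isPrime, fun h => by
      rw [h] at hmem
      exact ha (hinj (by simpa using hmem))⟩
  refine ⟨(WithZero.unitsWithZeroEquiv (α := Multiplicative ℤ)).toMonoidHom.comp
    (Units.map (P.valuation F).toMonoidWithZeroHom.toMonoidHom), ?_⟩
  intro u hu' h1
  have h2 : P.valuation F (u : F) < 1 := by
    rw [hu', IsScalarTower.algebraMap_apply A (integralClosure A F) F]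
    exact (P.valuation_lt_one_iff_mem _).mpr hmem
  have h3 : (Units.map (P.valuation F).toMonoidWithZeroHom.toMonoidHom) u = 1 := by
    apply (WithZero.unitsWithZeroEquiv (α := Multiplicative ℤ)).injective
    rw [map_one]
    exact h1
  have h4 := congrArg Units.val h3
  exact h2.ne h4

open Polynomial in
lemma exists_val_aux2 {E F : Type*} [Field E] [CharZero E] [Field F] [Algebra E F]
    [Algebra.EssFiniteType E F] (f : F) (hf : Transcendental E f) 
    (halg : Algebra.IsAlgebraic (Algebra.adjoin E {f}) F) :
    ∃ v : Fˣ →* Multiplicative ℤ, ∀ u : Fˣ, (u : F) = f → v u ≠ 1 := by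
  let : Algebra E[X] F := (aeval f).toRingHom.toAlgebra
  have hinj : Function.Injective (algebraMap E[X] F) := transcendental_iff_injective.mp hf
  have : FaithfulSMul E[X] F := (faithfulSMul_iff_algebraMap_injective _ _).mpr hinj
  let : Algebra (FractionRing E[X]) F := FractionRing.liftAlgebra _ _
  have : IsScalarTower E[X] (FractionRing E[X]) F := FractionRing.isScalarTower_liftAlgebra _ _
  have : IsScalarTower E E[X] F := IsScalarTower.of_algebraMap_eq fun x => by
    exact (aeval_C f x).symm
  have : IsScalarTower E (FractionRing E[X]) F := IsScalarTower.of_algebraMap_eq fun x => by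
    rw [IsScalarTower.algebraMap_apply E E[X] (FractionRing E[X]), 
      ← IsScalarTower.algebraMap_apply E[X] (FractionRing E[X]) F, ← IsScalarTower.algebraMap_apply]
  have : Algebra.IsAlgebraic E[X] F := by
    constructor
    intro z
    let fA : Algebra.adjoin E ({f} : Set F) := ⟨f, Algebra.subset_adjoin rfl⟩
    have hfA : ∀ p : E[X], ((aeval fA p : Algebra.adjoin E ({f} : Set F)) : F) = aeval f p := by
      intro p
      exact (aeval_algHom_apply (Algebra.adjoin E ({f} : Set F)).val fA p).symm
    refine IsAlgebraic.of_ringHom_of_comp_eq (aeval fA : E[X] →ₐ[E] _).toRingHom (RingHom.id F)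
      (a := z) (halg.isAlgebraic z) ?_ (fun _ _ h => h) ?_
    · rintro ⟨w, hw⟩
      have hw' := hw
      rw [Algebra.adjoin_singleton_eq_range_aeval] at hw'
      obtain ⟨p, hp⟩ := hw'
      exact ⟨p, Subtype.ext ((hfA p).trans hp)⟩
    · exact RingHom.ext fun p => hfA p
  have : Algebra.IsAlgebraic (FractionRing E[X]) F := 
    (IsFractionRing.comap_isAlgebraic_iff (A := E[X]) (K := FractionRing E[X]) (C := F)).mp this
  have : Algebra.EssFiniteType (FractionRing E[X]) F := Algebra.EssFiniteType.of_comp E _ F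
  have : FiniteDimensional (FractionRing E[X]) F := Algebra.finite_of_essFiniteType_of_isAlgebraic
  have h := exists_val_aux (A := E[X]) (L := FractionRing E[X]) (F := F) X X_ne_zero not_isUnit_X
  have hX : algebraMap E[X] F X = f := aeval_X f
  rwa [hX] at h

lemma alg_mono {R S F : Type*} [CommRing R] [CommRing S] [Field F] [Algebra R F] [Algebra S F]
    (g : R →+* S) (hg : Function.Injective g)
    (h : ∀ x, algebraMap S F (g x) = algebraMap R F x) (z : F) (hz : IsAlgebraic R z) :
    IsAlgebraic S z :=
  IsAlgebraic.ringHom_of_comp_eq g (RingHom.id F) (a := z) hz hg (RingHom.ext h)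

open IntermediateField IntermediateField.algebraAdjoinAdjoin in
lemma trans_adjoin_field {K F : Type*} [Field K] [Field F] [Algebra K F] (s : Set F) (f : F)
    (h1 : Transcendental (Algebra.adjoin K s) f) :
    Transcendental (IntermediateField.adjoin K s) f := by
  intro hcon
  apply h1
  exact (IsFractionRing.isAlgebraic_iff (Algebra.adjoin K s) (IntermediateField.adjoin K s) F).mpr hcon

lemma hle_aux {K F : Type*} [Field K] [Field F] [Algebra K F] (s : Set F) (f : F)
    (E : IntermediateField K F) (hs : ∀ x ∈ s, x ≠ f → x ∈ E) (x : F)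
    (hx : x ∈ Algebra.adjoin K s) : x ∈ Algebra.adjoin E ({f} : Set F) := by
  induction hx using Algebra.adjoin_induction with
  | mem x hx =>
    by_cases hxf : x = f
    · exact Algebra.subset_adjoin hxf
    · exact (Algebra.adjoin E ({f} : Set F)).algebraMap_mem (⟨x, hs x hx hxf⟩ : E)
  | algebraMap r =>
    exact (Algebra.adjoin E ({f} : Set F)).algebraMap_mem (algebraMap K E r)
  | add x y _ _ hx hy => exact add_mem hx hy
  | mul x y _ _ hx hy => exact mul_mem hx hy

lemma halg_aux {K F : Type*} [Field K] [Field F] [Algebra K F] (S : Subalgebra K F)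
    {E : Type*} [Field E] [Algebra E F] (T : Subalgebra E F) (hST : ∀ x ∈ S, x ∈ T)
    (h : Algebra.IsAlgebraic S F) : Algebra.IsAlgebraic T F := by
  let g : S →+* T :=
    { toFun := fun x => ⟨x, hST x x.2⟩
      map_one' := rfl
      map_mul' := fun _ _ => rfl
      map_zero' := rfl
      map_add' := fun _ _ => rfl }
  constructor
  intro z
  exact alg_mono g (fun a b hab => by
    have h3 : ((g a : T) : F) = (g b : T) := by
      rw [hab]
    exact Subtype.ext h3) (fun x => rfl) z (h.isAlgebraic z)

/-- A transcendental element of a finitely generated field extension has a nonzero discrete valuation. -/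
lemma exists_val {K F : Type*} [Field K] [CharZero K] [Field F] [Algebra K F]
    [Algebra.EssFiniteType K F] (f : F) (hf : Transcendental K f) :
    ∃ v : Fˣ →* Multiplicative ℤ, ∀ u : Fˣ, (u : F) = f → v u ≠ 1 := by
  have hind : AlgebraicIndepOn K id ({f} : Set F) := by
    have : AlgebraicIndependent K (fun x : ({f} : Set F) => (x : F)) := by
      have := (algebraicIndependent_unique_type_iff (R := K) (x := fun x : ({f} : Set F) => (x : F)))
      rw [this]
      exact hf
    exact this
  obtain ⟨s, hfs, hs⟩ := exists_isTranscendenceBasis_superset hind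
  have hfs : f ∈ s := hfs rfl
  obtain ⟨E, hE⟩ : ∃ E, E = IntermediateField.adjoin K (s \ {f}) := ⟨_, rfl⟩
  have hfE : Transcendental E f := by
    have h1 := hs.1.transcendental_adjoin (s := {x : s | (x : F) ≠ f}) (i := ⟨f, hfs⟩) (by simp)
    have h2 : ((fun x : s => (x : F)) '' {x : s | (x : F) ≠ f}) = s \ {f} := by
      ext z; simp; tauto
    rw [h2] at h1
    rw [hE]
    exact trans_adjoin_field _ _ h1
  have : Algebra.EssFiniteType E F := Algebra.EssFiniteType.of_comp K E F
  refine exists_val_aux2 (E := E) f hfE ?_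
  refine halg_aux _ _ (hle_aux _ f E ?_) hs.isAlgebraic
  rintro _ ⟨x, rfl⟩ hx
  rw [hE]
  exact IntermediateField.subset_adjoin K _ ⟨x.2, hx⟩

namespace BadFields
set_option linter.unusedSectionVars false
section Geo
variable {K : Type} [Field K] {ι κ : Type} [Fintype ι] [Fintype κ]

/-- Evaluation of a polynomial at a point of the torus. -/
noncomputable abbrev ev (x : ι → Kˣ) (p : MvPolynomial ι K) : K :=
  MvPolynomial.eval (fun i => (x i : K)) p

lemma isZClosed_iff {V : Set (ι → Kˣ)} : IsZClosed K V ↔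
    ∀ x, x ∉ V → ∃ p, (∀ y ∈ V, ev y p = 0) ∧ ev x p ≠ 0 := by
  constructor
  · rintro ⟨S, rfl⟩ x hx
    simp only [zeroSet, Set.mem_ofPred_eq, not_forall] at hx
    obtain ⟨p, hp, hx⟩ := hx
    exact ⟨p, fun y hy => hy p hp, hx⟩
  · intro h
    refine ⟨{p | ∀ y ∈ V, ev y p = 0}, ?_⟩
    ext x
    constructor
    · intro hx p hp
      exact hp x hx
    · intro hx
      by_contra hn
      obtain ⟨p, hp, hpx⟩ := h x hn
      exact hpx (hx p hp)

lemma IsZClosed.union {C D : Set (ι → Kˣ)} (hC : IsZClosed K C) (hD : IsZClosed K D) :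
    IsZClosed K (C ∪ D) := by
  rw [isZClosed_iff] at *
  intro x hx
  rw [Set.mem_union, not_or] at hx
  obtain ⟨p, hp, hpx⟩ := hC x hx.1
  obtain ⟨q, hq, hqx⟩ := hD x hx.2
  refine ⟨p * q, ?_, ?_⟩
  · rintro y (hy | hy)
    · simp only [ev, map_mul] at *
      rw [hp y hy, zero_mul]
    · simp only [ev, map_mul] at *
      rw [hq y hy, mul_zero]
  · simp only [ev, map_mul] at *
    exact mul_ne_zero hpx hqx

lemma IsZClosed.sInter {C D : Set (ι → Kˣ)} (hC : IsZClosed K C) (hD : IsZClosed K D) :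
    IsZClosed K (C ∩ D) := by
  rw [isZClosed_iff] at *
  intro x hx
  by_cases hxC : x ∈ C
  · obtain ⟨p, hp, h⟩ := hD x (fun h => hx ⟨hxC, h⟩)
    exact ⟨p, fun y hy => hp y hy.2, h⟩
  · obtain ⟨p, hp, h⟩ := hC x hxC
    exact ⟨p, fun y hy => hp y hy.1, h⟩

lemma isZClosed_empty : IsZClosed K (∅ : Set (ι → Kˣ)) := by
  rw [isZClosed_iff]
  intro x _
  exact ⟨1, by simp, by simp [ev]⟩

lemma isZClosed_univ : IsZClosed K (Set.univ : Set (ι → Kˣ)) := by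
  rw [isZClosed_iff]
  intro x hx
  simp at hx

lemma isZClosed_biUnion {α : Type*} (s : Finset α) (C : α → Set (ι → Kˣ))
    (h : ∀ a ∈ s, IsZClosed K (C a)) : IsZClosed K (⋃ a ∈ s, C a) := by
  classical
  induction s using Finset.induction_on with
  | empty => simpa using isZClosed_empty
  | insert a s ha ih =>
    rw [Finset.set_biUnion_insert]
    exact (h a (by simp)).union (ih fun b hb => h b (by simp [hb]))

lemma irred_biUnion {V : Set (ι → Kˣ)} (hV : IsIrredVar K V) {α : Type*} (s : Finset α)
    (C : α → Set (ι → Kˣ)) (h : ∀ a ∈ s, IsZClosed K (C a)) (hVC : V ⊆ ⋃ a ∈ s, C a) :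
    ∃ a ∈ s, V ⊆ C a := by
  classical
  induction s using Finset.induction_on with
  | empty =>
    obtain ⟨x, hx⟩ := hV.2.1
    simpa using hVC hx
  | insert a s ha ih =>
    rw [Finset.set_biUnion_insert] at hVC
    rcases hV.2.2 _ _ (h a (by simp))
      (isZClosed_biUnion s C fun b hb => h b (by simp [hb])) hVC with h1 | h1
    · exact ⟨a, by simp, h1⟩
    · obtain ⟨b, hb, hbV⟩ := ih (fun b hb => h b (by simp [hb])) h1
      exact ⟨b, by simp [hb], hbV⟩

/-- Regular functions to the multiplicative group. -/
def RegFun (g : (ι → Kˣ) → Kˣ) : Prop :=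
  ∃ a d : MvPolynomial ι K, ∀ x, ev x d ≠ 0 ∧ (g x : K) * ev x d = ev x a

lemma RegFun.coord (i : ι) : RegFun (fun x : ι → Kˣ => x i) :=
  ⟨MvPolynomial.X i, 1, fun x => by simp [ev]⟩

lemma RegFun.const (c : Kˣ) : RegFun (fun _ : ι → Kˣ => c) :=
  ⟨MvPolynomial.C (c : K), 1, fun x => by simp [ev]⟩

lemma RegFun.mul {g h : (ι → Kˣ) → Kˣ} (hg : RegFun g) (hh : RegFun h) :
    RegFun (fun x => g x * h x) := by
  obtain ⟨a, d, h1⟩ := hg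
  obtain ⟨b, e, h2⟩ := hh
  refine ⟨a * b, d * e, fun x => ⟨?_, ?_⟩⟩
  · simp only [ev, map_mul] at *
    exact mul_ne_zero (h1 x).1 (h2 x).1
  · simp only [ev, map_mul, Units.val_mul] at *
    rw [← (h1 x).2, ← (h2 x).2]
    ring

lemma RegFun.inv {g : (ι → Kˣ) → Kˣ} (hg : RegFun g) : RegFun (fun x => (g x)⁻¹) := by
  obtain ⟨a, d, h1⟩ := hg
  refine ⟨d, a, fun x => ⟨?_, ?_⟩⟩
  · rw [← (h1 x).2]
    exact mul_ne_zero (g x).ne_zero (h1 x).1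
  · rw [← (h1 x).2]
    simp

lemma RegFun.pow {g : (ι → Kˣ) → Kˣ} (hg : RegFun g) (k : ℕ) : RegFun (fun x => (g x) ^ k) := by
  induction k with
  | zero => simpa using RegFun.const 1
  | succ k ih => simpa only [pow_succ] using ih.mul hg

lemma RegFun.zpow {g : (ι → Kˣ) → Kˣ} (hg : RegFun g) (k : ℤ) : RegFun (fun x => (g x) ^ k) := by
  cases k with
  | ofNat k => simpa using hg.pow k
  | negSucc k => simpa using (hg.pow (k + 1)).inv

lemma RegFun.prod {α : Type*} (s : Finset α) {g : α → (ι → Kˣ) → Kˣ}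
    (hg : ∀ a, RegFun (g a)) : RegFun (fun x => ∏ a ∈ s, g a x) := by
  classical
  induction s using Finset.induction_on with
  | empty => simpa using RegFun.const 1
  | insert a s ha ih => simpa only [Finset.prod_insert ha] using (hg a).mul ih

/-- Regular maps between tori. -/
def RegMap (φ : (ι → Kˣ) → (κ → Kˣ)) : Prop := ∀ j, RegFun (fun x => φ x j)

lemma RegMap.pull {φ : (ι → Kˣ) → (κ → Kˣ)} (h : RegMap φ) (p : MvPolynomial κ K) :
    ∃ q D : MvPolynomial ι K, ∀ x, ev x D ≠ 0 ∧ ev (φ x) p * ev x D = ev x q := by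
  induction p using MvPolynomial.induction_on with
  | C a => exact ⟨MvPolynomial.C a, 1, fun x => by simp [ev]⟩
  | add p q hp hq =>
    obtain ⟨a, d, h1⟩ := hp
    obtain ⟨b, e, h2⟩ := hq
    refine ⟨a * e + b * d, d * e, fun x => ⟨?_, ?_⟩⟩
    · simp only [ev, map_mul] at *
      exact mul_ne_zero (h1 x).1 (h2 x).1
    · simp only [ev, map_mul, map_add] at *
      rw [← (h1 x).2, ← (h2 x).2]
      ring
  | mul_X p j hp =>
    obtain ⟨a, d, h1⟩ := hp
    obtain ⟨b, e, h2⟩ := h j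
    refine ⟨a * b, d * e, fun x => ⟨?_, ?_⟩⟩
    · simp only [ev, map_mul] at *
      exact mul_ne_zero (h1 x).1 (h2 x).1
    · simp only [ev, map_mul, MvPolynomial.eval_X] at *
      rw [← (h1 x).2, ← (h2 x).2]
      ring

lemma RegMap.preimage {φ : (ι → Kˣ) → (κ → Kˣ)} (h : RegMap φ) {C : Set (κ → Kˣ)}
    (hC : IsZClosed K C) : IsZClosed K (φ ⁻¹' C) := by
  rw [isZClosed_iff] at *
  intro x hx
  obtain ⟨p, hp, hpx⟩ := hC (φ x) hx
  obtain ⟨q, D, hq⟩ := h.pull p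
  refine ⟨q, fun y hy => ?_, ?_⟩
  · rw [← (hq y).2, hp _ hy, zero_mul]
  · rw [← (hq x).2]
    exact mul_ne_zero hpx (hq x).1

/-- A closed image of an irreducible set under a regular map is irreducible. -/
lemma IsIrredVar.image {φ : (ι → Kˣ) → (κ → Kˣ)} (h : RegMap φ) {V : Set (ι → Kˣ)}
    (hV : IsIrredVar K V) (hc : IsZClosed K (φ '' V)) : IsIrredVar K (φ '' V) := by
  refine ⟨hc, hV.2.1.image _, fun C D hC hD hCD => ?_⟩
  rw [Set.image_subset_iff, Set.image_subset_iff]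
  apply hV.2.2 _ _ (h.preimage hC) (h.preimage hD)
  rw [← Set.preimage_union, ← Set.image_subset_iff]
  exact hCD

lemma zcl_of_closed {V : Set (ι → Kˣ)} (h : IsZClosed K V) : zcl K V = V := by
  apply Set.Subset.antisymm
  · exact Set.sInter_subset_of_mem ⟨h, subset_rfl⟩
  · exact Set.subset_sInter fun C hC => hC.2

/-- vanishing ideal -/
def vI (V : Set (ι → Kˣ)) : Ideal (MvPolynomial ι K) where
  carrier := {p | ∀ x ∈ V, ev x p = 0}
  zero_mem' := by simp [ev]
  add_mem' := by
    intro p q hp hq x hx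
    have h1 : ev x p = 0 := hp x hx
    have h2 : ev x q = 0 := hq x hx
    simp only [ev, map_add] at *
    rw [h1, h2, add_zero]
  smul_mem' := by
    intro c p hp x hx
    have h1 : ev x p = 0 := hp x hx
    simp only [ev, smul_eq_mul, map_mul] at *
    rw [h1, mul_zero]

lemma mem_vI {V : Set (ι → Kˣ)} {p : MvPolynomial ι K} : p ∈ vI V ↔ ∀ x ∈ V, ev x p = 0 := Iff.rfl

lemma subset_of_vI_le {V W : Set (ι → Kˣ)} (hW : IsZClosed K W) (h : vI W ≤ vI V) : V ⊆ W := by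
  intro x hx
  by_contra hn
  obtain ⟨p, hp, hpx⟩ := isZClosed_iff.mp hW x hn
  exact hpx (h (mem_vI.mpr hp) x hx)

lemma vI_anti {V W : Set (ι → Kˣ)} (h : V ⊆ W) : vI W ≤ vI V := fun _ hp x hx => hp x (h hx)

lemma isZClosed_zero (p : MvPolynomial ι K) : IsZClosed K {x | ev x p = 0} :=
  ⟨{p}, by ext x; simp [zeroSet, ev]⟩

lemma IsIrredVar.vI_prime {V : Set (ι → Kˣ)} (h : IsIrredVar K V) : (vI V).IsPrime := by
  constructor
  · intro hh
    obtain ⟨x, hx⟩ := h.2.1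
    have : (1 : MvPolynomial ι K) ∈ vI V := hh ▸ Submodule.mem_top
    have := this x hx
    simp [ev] at this
  · intro p q hpq
    have := h.2.2 _ _ (isZClosed_zero p) (isZClosed_zero q) (fun x hx => by
      have := hpq x hx
      simp only [ev, map_mul, mul_eq_zero] at this
      exact this)
    exact this

/-- Descending chain condition. -/
lemma exists_min_closed (P : Set (ι → Kˣ) → Prop) (h : ∃ C, IsZClosed K C ∧ P C) :
    ∃ C, IsZClosed K C ∧ P C ∧ ∀ D, IsZClosed K D → P D → D ⊆ C → D = C := by
  obtain ⟨C, hC, hP⟩ := h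
  obtain ⟨I, ⟨C, hC, hP, rfl⟩, hI⟩ := set_has_maximal_iff_noetherian.mpr
    (inferInstance : IsNoetherian (MvPolynomial ι K) (MvPolynomial ι K))
    {I | ∃ C, IsZClosed K C ∧ P C ∧ vI C = I} ⟨vI C, C, hC, hP, rfl⟩
  refine ⟨C, hC, hP, fun D hD hPD hDC => hDC.antisymm (subset_of_vI_le hD ?_)⟩
  by_contra hn
  exact hI _ ⟨D, hD, hPD, rfl⟩ (lt_of_le_not_ge (vI_anti hDC) hn)

lemma ev_funext [Infinite K] (p : MvPolynomial ι K) (h : ∀ x : ι → Kˣ, ev x p = 0) : p = 0 := by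
  apply MvPolynomial.funext_set (fun _ : ι => ({0}ᶜ : Set K))
  · intro _
    exact Set.Finite.infinite_compl (Set.finite_singleton 0)
  · intro x hx
    have hx' : ∀ i, x i ≠ 0 := fun i => by simpa using hx i (Set.mem_univ i)
    simpa [ev] using h (fun i => Units.mk0 (x i) (hx' i))

lemma irred_univ [Infinite K] : IsIrredVar K (Set.univ : Set (ι → Kˣ)) := by
  refine ⟨isZClosed_univ, Set.univ_nonempty, fun C D hC hD h => ?_⟩
  by_contra! hcon
  obtain ⟨x, -, hx⟩ := Set.not_subset.mp hcon.1
  obtain ⟨y, -, hy⟩ := Set.not_subset.mp hcon.2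
  obtain ⟨p, hp, hpx⟩ := isZClosed_iff.mp hC x hx
  obtain ⟨q, hq, hqy⟩ := isZClosed_iff.mp hD y hy
  have : p * q = 0 := ev_funext _ fun z => by
    rw [ev, map_mul]
    rcases h (Set.mem_univ z) with hz | hz
    · exact mul_eq_zero_of_left (hp z hz) _
    · exact mul_eq_zero_of_right _ (hq z hz)
  rcases mul_eq_zero.mp this with rfl | rfl
  · simp [ev] at hpx
  · simp [ev] at hqy

end Geo
end BadFields

namespace BadFields
set_option linter.unusedSectionVars false
section Avg
variable {K : Type} [Field K] {ι : Type} [Fintype ι]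

noncomputable instance rootsFin (M : ℕ) [NeZero M] : Fintype (rootsOfUnity M K) := Fintype.ofFinite _

/-- coordinatewise power -/
def pw (M : ℕ) (x : ι → Kˣ) : ι → Kˣ := fun i => x i ^ M

/-- twisting by a tuple of roots of unity -/
def tw {M : ℕ} (ζ : ι → rootsOfUnity M K) (x : ι → Kˣ) : ι → Kˣ := fun i => (ζ i : Kˣ) * x i

lemma pw_reg (M : ℕ) : RegMap (pw M : (ι → Kˣ) → ι → Kˣ) := fun i => (RegFun.coord i).pow M

lemma tw_reg {M : ℕ} (ζ : ι → rootsOfUnity M K) : RegMap (tw ζ) :=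
  fun i => (RegFun.const _).mul (RegFun.coord i)

lemma pw_tw {M : ℕ} (ζ : ι → rootsOfUnity M K) (x : ι → Kˣ) : pw M (tw ζ x) = pw M x := by
  funext i
  have : ((ζ i : Kˣ)) ^ M = 1 := (mem_rootsOfUnity _ _).mp (ζ i).2
  simp [pw, tw, mul_pow, this]

lemma tw_mul {M : ℕ} (ζ ξ : ι → rootsOfUnity M K) (x : ι → Kˣ) :
    tw (ζ * ξ) x = tw ζ (tw ξ x) := by
  funext i
  simp [tw, mul_assoc]

lemma tw_one {M : ℕ} (x : ι → Kˣ) : tw (1 : ι → rootsOfUnity M K) x = x := by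
  funext i
  simp [tw]

lemma pw_eq {M : ℕ} {x y : ι → Kˣ} (h : pw M x = pw M y) :
    ∃ ζ : ι → rootsOfUnity M K, y = tw ζ x := by
  refine ⟨fun i => ⟨y i * (x i)⁻¹, ?_⟩, ?_⟩
  · rw [mem_rootsOfUnity, mul_pow, inv_pow]
    have := congrFun h i
    simp only [pw] at this
    rw [this, mul_inv_cancel]
  · funext i
    simp [tw]

lemma pw_mul (a b : ℕ) (x : ι → Kˣ) : pw (a * b) x = pw b (pw a x) := by
  funext i
  simp [pw, pow_mul]

lemma pw_surj [IsAlgClosed K] (M : ℕ) (hM : M ≠ 0) (y : ι → Kˣ) : ∃ x, pw M x = y := by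
  have : ∀ i, ∃ u : Kˣ, u ^ M = y i := by
    intro i
    obtain ⟨z, hz⟩ := IsAlgClosed.exists_pow_nat_eq (y i : K) (Nat.pos_of_ne_zero hM)
    have hz0 : z ≠ 0 := by
      rintro rfl
      rw [zero_pow hM] at hz
      exact (y i).ne_zero hz.symm
    exact ⟨Units.mk0 z hz0, Units.ext (by simpa using hz)⟩
  choose x hx using this
  exact ⟨x, funext hx⟩

/-- monomials -/
noncomputable def mon (r : ι → ℕ) : MvPolynomial ι K :=
  MvPolynomial.monomial (Finsupp.equivFunOnFinite.symm r) 1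

lemma ev_monomial (x : ι → Kˣ) (s : ι →₀ ℕ) (a : K) :
    ev x (MvPolynomial.monomial s a) = a * ∏ i, (x i : K) ^ s i := by
  rw [ev, MvPolynomial.eval_monomial, Finsupp.prod_fintype]
  simp

lemma ev_mon (x : ι → Kˣ) (r : ι → ℕ) : ev x (mon r) = ∏ i, (x i : K) ^ r i := by
  rw [mon, ev_monomial]
  simp

variable [IsAlgClosed K] [CharZero K]

lemma exists_prim (M : ℕ) [NeZero M] : ∃ w : rootsOfUnity M K, ∀ s : ℤ, (w : Kˣ) ^ s = 1 → (M : ℤ) ∣ s := by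
  obtain ⟨w, hw⟩ := HasEnoughRootsOfUnity.exists_primitiveRoot K M
  have hu : IsUnit w := hw.isUnit (NeZero.ne M)
  obtain ⟨u, rfl⟩ := hu
  have hu : IsPrimitiveRoot u M := IsPrimitiveRoot.coe_units_iff.mp hw
  refine ⟨⟨u, (mem_rootsOfUnity _ _).mpr hu.pow_eq_one⟩, fun s hs => ?_⟩
  exact (hu.zpow_eq_one_iff_dvd s).mp hs

lemma sum_roots (M : ℕ) [NeZero M] (s : ℕ) (h : ∑ w : rootsOfUnity M K, ((w : Kˣ) : K) ^ s ≠ 0) :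
    M ∣ s := by
  obtain ⟨w, hw⟩ := exists_prim (K := K) M
  have h1 : ((w : Kˣ) : K) ^ s * ∑ u : rootsOfUnity M K, ((u : Kˣ) : K) ^ s =
      ∑ u : rootsOfUnity M K, ((u : Kˣ) : K) ^ s := by
    rw [Finset.mul_sum]
    refine Fintype.sum_equiv (Equiv.mulLeft w) _ _ fun u => ?_
    simp [mul_pow]
  have h2 : ((w : Kˣ) : K) ^ s = 1 := by
    have : (((w : Kˣ) : K) ^ s - 1) * ∑ u : rootsOfUnity M K, ((u : Kˣ) : K) ^ s = 0 := by
      rw [sub_mul, h1, one_mul, sub_self]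
    rcases mul_eq_zero.mp this with h3 | h3
    · exact sub_eq_zero.mp h3
    · exact absurd h3 h
  have := hw s (Units.ext (by simpa using h2))
  exact_mod_cast this

lemma avg_poly (M : ℕ) [NeZero M] [DecidableEq ι] (f : MvPolynomial ι K) : ∃ U : MvPolynomial ι K, ∀ x,
    ∑ ζ : ι → rootsOfUnity M K, ev (tw ζ x) f = ev (pw M x) U := by
  induction f using MvPolynomial.induction_on' with
  | add p q hp hq =>
    obtain ⟨U, hU⟩ := hp
    obtain ⟨W, hW⟩ := hq
    refine ⟨U + W, fun x => ?_⟩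
    have h1 := hU x
    have h2 := hW x
    simp only [ev, map_add, Finset.sum_add_distrib] at *
    rw [h1, h2]
  | monomial s a =>
    have key : ∀ x : ι → Kˣ, ∑ ζ : ι → rootsOfUnity M K, ev (tw ζ x) (MvPolynomial.monomial s a) =
        a * (∏ i, (x i : K) ^ s i) * ∏ i, ∑ w : rootsOfUnity M K, ((w : Kˣ) : K) ^ s i := by
      intro x
      rw [Finset.prod_univ_sum, Fintype.piFinset_univ, Finset.mul_sum]
      refine Finset.sum_congr rfl fun ζ _ => ?_
      rw [ev_monomial]
      simp only [tw, Units.val_mul, mul_pow, Finset.prod_mul_distrib]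
      ring
    by_cases h : ∏ i, ∑ w : rootsOfUnity M K, ((w : Kˣ) : K) ^ s i = 0
    · exact ⟨0, fun x => by rw [key, h]; simp [ev]⟩
    · have h' : ∀ i, M ∣ s i := fun i => sum_roots M _ (Finset.prod_ne_zero_iff.mp h i (Finset.mem_univ i))
      choose t ht using h'
      refine ⟨MvPolynomial.C (a * ∏ i, ∑ w : rootsOfUnity M K, ((w : Kˣ) : K) ^ s i) * mon t,
        fun x => ?_⟩
      rw [key, ev, map_mul, MvPolynomial.eval_C]
      have := ev_mon (pw M x) t
      rw [ev] at this
      rw [this]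
      have : ∏ i, ((pw M x i : Kˣ) : K) ^ t i = ∏ i, (x i : K) ^ s i := 
        Finset.prod_congr rfl fun i _ => by
          rw [ht i]; simp [pw, pow_mul]
      rw [this]
      ring

lemma geom_roots (M : ℕ) [NeZero M] (w : rootsOfUnity M K) (hw : w ≠ 1) :
    ∑ k : Fin M, ((w : Kˣ) : K) ^ (k : ℕ) = 0 := by
  rw [Fin.sum_univ_eq_sum_range (fun k => ((w : Kˣ) : K) ^ k)]
  have h1 : ((w : Kˣ) : K) ≠ 1 := fun h => hw (Subtype.ext (Units.ext h))
  have h2 : ((w : Kˣ) : K) ^ M = 1 := by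
    have := (mem_rootsOfUnity _ _).mp w.2
    have h := congrArg Units.val this
    simpa using h
  rw [geom_sum_eq h1, h2, sub_self, zero_div]

lemma avg_ne (M : ℕ) [NeZero M] [DecidableEq ι] (h : MvPolynomial ι K) (x : ι → Kˣ) (hx : ev x h ≠ 0) :
    ∃ r : ι → ℕ, ∑ ζ : ι → rootsOfUnity M K, ev (tw ζ x) (mon r * h) ≠ 0 := by
  by_contra! hcon
  have h1 : ∀ r : ι → Fin M, ∑ ζ : ι → rootsOfUnity M K,
      (∏ i, (((ζ i : Kˣ)) : K) ^ (r i : ℕ)) * ev (tw ζ x) h = 0 := by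
    intro r
    have := hcon (fun i => r i)
    have h2 : ∀ ζ : ι → rootsOfUnity M K, ev (tw ζ x) (mon (fun i => (r i : ℕ)) * h) =
        (∏ i, (x i : K) ^ (r i : ℕ)) * ((∏ i, (((ζ i : Kˣ)) : K) ^ (r i : ℕ)) * ev (tw ζ x) h) := by
      intro ζ
      have hm := ev_mon (tw ζ x) (fun i => (r i : ℕ))
      simp only [ev, map_mul] at hm ⊢
      rw [hm]
      simp only [tw, Units.val_mul, mul_pow, Finset.prod_mul_distrib]
      ring
    simp_rw [h2] at this
    rw [← Finset.mul_sum] at this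
    rcases mul_eq_zero.mp this with h3 | h3
    · exact absurd h3 (Finset.prod_ne_zero_iff.mpr fun i _ => pow_ne_zero _ (x i).ne_zero)
    · exact h3
  have h2 : ∑ r : ι → Fin M, ∑ ζ : ι → rootsOfUnity M K,
      (∏ i, (((ζ i : Kˣ)) : K) ^ (r i : ℕ)) * ev (tw ζ x) h = 0 := Finset.sum_eq_zero fun r _ => h1 r
  rw [Finset.sum_comm] at h2
  simp_rw [← Finset.sum_mul] at h2
  have h3 : ∀ ζ : ι → rootsOfUnity M K, ∑ r : ι → Fin M, ∏ i, (((ζ i : Kˣ)) : K) ^ (r i : ℕ) =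
      ∏ i, ∑ k : Fin M, (((ζ i : Kˣ)) : K) ^ (k : ℕ) := by
    intro ζ
    rw [Finset.prod_univ_sum, Fintype.piFinset_univ]
  simp_rw [h3] at h2
  rw [Finset.sum_eq_single 1] at h2
  · rw [tw_one] at h2
    simp only [Pi.one_apply, OneMemClass.coe_one, Units.val_one, one_pow, Finset.sum_const,
      Finset.card_univ, Fintype.card_fin, nsmul_eq_mul, mul_one, Finset.prod_const] at h2
    rcases mul_eq_zero.mp h2 with h4 | h4
    · exact pow_ne_zero _ (Nat.cast_ne_zero.mpr (NeZero.ne M)) h4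
    · exact hx h4
  · intro ζ _ hζ
    obtain ⟨i, hi⟩ := Function.ne_iff.mp hζ
    rw [Finset.prod_eq_zero (Finset.mem_univ i) (geom_roots M _ hi), zero_mul]
  · simp

lemma tw_closed {M : ℕ} (ζ : ι → rootsOfUnity M K) {C : Set (ι → Kˣ)} (hC : IsZClosed K C) :
    IsZClosed K (tw ζ '' C) := by
  have : tw ζ '' C = tw ζ⁻¹ ⁻¹' C := by
    ext x
    constructor
    · rintro ⟨y, hy, rfl⟩
      rw [Set.mem_preimage, ← tw_mul, inv_mul_cancel, tw_one]
      exact hy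
    · intro hx
      exact ⟨_, hx, by rw [← tw_mul, mul_inv_cancel, tw_one]⟩
  rw [this]
  exact (tw_reg _).preimage hC

lemma tw_irred {M : ℕ} (ζ : ι → rootsOfUnity M K) {C : Set (ι → Kˣ)} (hC : IsIrredVar K C) :
    IsIrredVar K (tw ζ '' C) := hC.image (tw_reg ζ) (tw_closed ζ hC.1)

lemma pw_closed (M : ℕ) [NeZero M] {C : Set (ι → Kˣ)} (hC : IsZClosed K C) :
    IsZClosed K (pw M '' C) := by
  classical
  rw [isZClosed_iff]
  intro y hy
  obtain ⟨x, rfl⟩ := pw_surj M (NeZero.ne M) y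
  have hD : IsZClosed K (⋃ ζ ∈ (Finset.univ : Finset (ι → rootsOfUnity M K)), tw ζ '' C) :=
    isZClosed_biUnion _ _ fun ζ _ => tw_closed ζ hC
  obtain ⟨h, hh, hx⟩ := isZClosed_iff.mp hD x (by
    simp only [Finset.mem_univ, Set.iUnion_true, Set.mem_iUnion, not_exists]
    rintro ζ ⟨z, hz, rfl⟩
    exact hy ⟨z, hz, (pw_tw ζ z).symm⟩)
  obtain ⟨r, hr⟩ := avg_ne M h x hx
  obtain ⟨U, hU⟩ := avg_poly M (mon r * h)
  refine ⟨U, ?_, ?_⟩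
  · rintro _ ⟨z, hz, rfl⟩
    rw [← hU]
    refine Finset.sum_eq_zero fun ζ _ => ?_
    have := hh (tw ζ z) (by
      simp only [Finset.mem_univ, Set.iUnion_true, Set.mem_iUnion]
      exact ⟨ζ, z, hz, rfl⟩)
    simp only [ev, map_mul] at *
    rw [this, mul_zero]
  · rw [← hU]
    exact hr

/-- translates of a subset of the preimage covering it -/
lemma subset_tw {M : ℕ} [NeZero M] {C W : Set (ι → Kˣ)} (hC : IsZClosed K C)
    (hW : IsIrredVar K W) (h : pw M '' W ⊆ pw M '' C) :
    ∃ ζ : ι → rootsOfUnity M K, W ⊆ tw ζ '' C := by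
  classical
  obtain ⟨ζ, -, hζ⟩ := irred_biUnion hW (Finset.univ : Finset (ι → rootsOfUnity M K))
    (fun ζ => tw ζ '' C) (fun ζ _ => tw_closed ζ hC) (by
      intro x hx
      obtain ⟨c, hc, hcx⟩ := h ⟨x, hx, rfl⟩
      obtain ⟨ζ, hζ⟩ := pw_eq hcx
      simp only [Finset.mem_univ, Set.iUnion_true, Set.mem_iUnion]
      exact ⟨ζ, c, hc, hζ.symm⟩)
  exact ⟨ζ, hζ⟩

lemma tw_pow_subset {M : ℕ} (ζ : ι → rootsOfUnity M K) {W : Set (ι → Kˣ)} (h : W ⊆ tw ζ '' W)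
    (k : ℕ) : tw ζ '' W ⊆ tw (ζ ^ (k + 1)) '' W := by
  induction k with
  | zero => simp
  | succ k ih =>
    refine ih.trans ?_
    rintro _ ⟨x, hx, rfl⟩
    obtain ⟨y, hy, rfl⟩ := h hx
    exact ⟨y, hy, by rw [pow_succ _ (k + 1), tw_mul]⟩

lemma tw_eq_of_subset {M : ℕ} [NeZero M] (ζ : ι → rootsOfUnity M K) {W : Set (ι → Kˣ)}
    (h : W ⊆ tw ζ '' W) : tw ζ '' W = W := by
  apply Set.Subset.antisymm _ h
  have h1 := tw_pow_subset ζ h (M - 1)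
  have h2 : ζ ^ (M - 1 + 1) = 1 := by
    rw [Nat.sub_add_cancel (Nat.one_le_iff_ne_zero.mpr (NeZero.ne M))]
    funext i
    exact Subtype.ext ((mem_rootsOfUnity _ _).mp (ζ i).2)
  rw [h2] at h1
  have h3 : tw (1 : ι → rootsOfUnity M K) '' W = W := by
    have : tw (1 : ι → rootsOfUnity M K) = id := funext fun x => tw_one x
    rw [this, Set.image_id]
  rwa [h3] at h1

/-- existence of an irreducible closed set over `V` -/
lemma exists_irred_over (M : ℕ) [NeZero M] {V : Set (ι → Kˣ)} (hV : IsIrredVar K V) :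
    ∃ W, IsIrredVar K W ∧ pw M '' W = V := by
  obtain ⟨C, hC, hCV, hmin⟩ := exists_min_closed (fun C : Set (ι → Kˣ) => pw M '' C = V)
    ⟨pw M ⁻¹' V, (pw_reg M).preimage hV.1,
      Set.image_preimage_eq V (fun y => pw_surj M (NeZero.ne M) y)⟩
  refine ⟨C, ⟨hC, ?_, fun D E hD hE hDE => ?_⟩, hCV⟩
  · rw [← Set.image_nonempty (f := pw M), hCV]
    exact hV.2.1
  · have h1 : V ⊆ pw M '' (C ∩ D) ∪ pw M '' (C ∩ E) := by
      rw [← Set.image_union, ← Set.inter_union_distrib_left, Set.inter_eq_left.mpr hDE, hCV]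
    have aux : ∀ D, IsZClosed K D → V ⊆ pw M '' (C ∩ D) → C ⊆ D := by
      intro D hD h
      have := hmin (C ∩ D) (hC.sInter hD)
        (Set.Subset.antisymm (by rw [← hCV]; exact Set.image_mono Set.inter_subset_left) h)
        Set.inter_subset_left
      exact Set.inter_eq_left.mp this
    rcases hV.2.2 _ _ (pw_closed M (hC.sInter hD)) (pw_closed M (hC.sInter hE)) h1 with h2 | h2
    · exact Or.inl (aux D hD h2)
    · exact Or.inr (aux E hE h2)

lemma component_of_over (M : ℕ) [NeZero M] {V W : Set (ι → Kˣ)} (hW : IsIrredVar K W)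
    (h : pw M '' W = V) : IsIrredComponent K W (mroot K M V) := by
  refine ⟨hW, fun x hx => h ▸ ⟨x, hx, rfl⟩, fun W' hW' h1 h2 => ?_⟩
  obtain ⟨ζ, hζ⟩ := subset_tw (M := M) hW.1 hW' (by
    rw [h]
    rintro _ ⟨x, hx, rfl⟩
    exact h2 hx)
  rw [tw_eq_of_subset ζ (h1.trans hζ)] at hζ
  exact hζ.antisymm h1

lemma image_component (M : ℕ) [NeZero M] {V W : Set (ι → Kˣ)} (hV : IsIrredVar K V)
    (hW : IsIrredComponent K W (mroot K M V)) : pw M '' W = V := by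
  obtain ⟨C, hC, hCV⟩ := exists_irred_over M hV
  obtain ⟨ζ, hζ⟩ := subset_tw (M := M) hC.1 hW.1 (by
    rw [hCV]
    rintro _ ⟨x, hx, rfl⟩
    exact hW.2.1 hx)
  have h1 : pw M '' (tw ζ '' C) = V := by
    rw [← hCV, Set.image_image]
    simp_rw [pw_tw]
  have := hW.2.2 _ (tw_irred ζ hC) hζ (fun x hx => h1 ▸ ⟨x, hx, rfl⟩)
  rw [← this, h1]

end Avg
end BadFields

namespace BadFields
set_option linter.unusedSectionVars false
section Desc
variable {K : Type} [Field K] {ι : Type} [Fintype ι] [IsAlgClosed K] [CharZero K]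

lemma ev_mul (x : ι → Kˣ) (p q : MvPolynomial ι K) : ev x (p * q) = ev x p * ev x q := by
  simp [ev]

lemma descent (M : ℕ) [NeZero M] {W : Set (ι → Kˣ)} (hW : IsIrredVar K W) (c : ι → ℕ)
    (hc : ∀ ζ : ι → rootsOfUnity M K, tw ζ '' W = W → ∏ i, ((ζ i : Kˣ) : K) ^ c i = 1) :
    ∃ U Q : MvPolynomial ι K, (∃ x ∈ W, ev (pw M x) U ≠ 0) ∧
      ∀ x ∈ W, (∏ i, (x i : K) ^ c i) * ev (pw M x) U = ev (pw M x) Q := by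
  classical
  let S : Finset (ι → rootsOfUnity M K) := Finset.univ.filter fun ζ => tw ζ '' W ≠ W
  have hcl : IsZClosed K (⋃ ζ ∈ S, tw ζ '' W) :=
    isZClosed_biUnion _ _ fun ζ _ => tw_closed ζ hW.1
  have hnot : ¬ W ⊆ ⋃ ζ ∈ S, tw ζ '' W := by
    intro hsub
    obtain ⟨ζ, hζ, hh⟩ := irred_biUnion hW S (fun ζ => tw ζ '' W)
      (fun ζ _ => tw_closed ζ hW.1) hsub
    exact (Finset.mem_filter.mp hζ).2 (tw_eq_of_subset ζ hh)
  obtain ⟨x0, hx0, hx0'⟩ := Set.not_subset.mp hnot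
  obtain ⟨h, hh, hhx⟩ := isZClosed_iff.mp hcl x0 hx0'
  obtain ⟨r, hr⟩ := avg_ne M h x0 hhx
  obtain ⟨U, hU⟩ := avg_poly M (mon r * h)
  obtain ⟨Q, hQ⟩ := avg_poly M (mon (r + c) * h)
  refine ⟨U, Q, ⟨x0, hx0, by rw [← hU]; exact hr⟩, fun x hx => ?_⟩
  rw [← hU, ← hQ, Finset.mul_sum]
  refine Finset.sum_congr rfl fun ζ _ => ?_
  by_cases hζ : tw ζ '' W = W
  · have h1 := hc ζ hζ
    rw [ev_mul, ev_mul, ev_mon, ev_mon]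
    have h2 : ∏ i, ((tw ζ x i : Kˣ) : K) ^ (r + c) i =
        (∏ i, (x i : K) ^ c i) * ∏ i, ((tw ζ x i : Kˣ) : K) ^ r i := by
      simp only [tw, Pi.add_apply, pow_add, Units.val_mul, mul_pow, Finset.prod_mul_distrib]
      rw [h1]
      ring
    rw [h2]
    ring
  · have : ev (tw ζ x) h = 0 := hh _ (by
      simp only [Set.mem_iUnion]
      exact ⟨ζ, Finset.mem_filter.mpr ⟨Finset.mem_univ _, hζ⟩, x, hx, rfl⟩)
    rw [ev_mul, ev_mul, this]
    ring

/-- stabilizer -/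
def stab (M : ℕ) (W : Set (ι → Kˣ)) : Subgroup (ι → rootsOfUnity M K) where
  carrier := {ζ | tw ζ '' W = W}
  one_mem' := by
    have : tw (1 : ι → rootsOfUnity M K) = id := funext fun x => tw_one x
    show tw (1 : ι → rootsOfUnity M K) '' W = W
    rw [this, Set.image_id]
  mul_mem' := by
    intro a b ha hb
    have : tw (a * b) = tw a ∘ tw b := funext fun x => tw_mul a b x
    show tw (a * b) '' W = W
    rw [this, Set.image_comp, hb, ha]
  inv_mem' := by
    intro a ha
    show tw a⁻¹ '' W = W
    conv_lhs => rw [← ha]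
    rw [Set.image_image]
    simp_rw [← tw_mul, inv_mul_cancel, tw_one]
    exact Set.image_id' W

lemma mem_stab {M : ℕ} {W : Set (ι → Kˣ)} {ζ : ι → rootsOfUnity M K} :
    ζ ∈ stab M W ↔ tw ζ '' W = W := Iff.rfl

lemma duality (M : ℕ) [NeZero M] (H : Subgroup (ι → rootsOfUnity M K))
    (ζ₀ : ι → rootsOfUnity M K) (h0 : ζ₀ ∉ H) :
    ∃ c : ι → ℕ, (∀ ζ ∈ H, ∏ i, ((ζ i : Kˣ)) ^ c i = 1) ∧
      ∏ i, ((ζ₀ i : Kˣ)) ^ c i ≠ 1 := by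
  classical
  have hq : (QuotientGroup.mk ζ₀ : (ι → rootsOfUnity M K) ⧸ H) ≠ 1 := by
    rw [Ne, QuotientGroup.eq_one_iff]
    exact h0
  have : NeZero (Monoid.exponent ((ι → rootsOfUnity M K) ⧸ H)) :=
    ⟨Monoid.exponent_ne_zero_of_finite⟩
  obtain ⟨φ, hφ⟩ := CommGroup.exists_apply_ne_one_of_hasEnoughRootsOfUnity
    ((ι → rootsOfUnity M K) ⧸ H) K hq
  let ψ : (ι → rootsOfUnity M K) →* Kˣ := φ.comp (QuotientGroup.mk' H)
  obtain ⟨g, hg⟩ := IsCyclic.exists_generator (α := rootsOfUnity M K)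
  have hpow : ∀ u : rootsOfUnity M K, ∃ k : ℕ, g ^ k = u := fun u => by
    obtain ⟨k, hk⟩ := (mem_powers_iff_mem_zpowers (x := g) (y := u)).mpr (hg u)
    exact ⟨k, hk⟩
  have hi : ∀ i, ∃ c : ℕ, (g : Kˣ) ^ c = ψ (Pi.mulSingle i g) := by
    intro i
    have hr : ψ (Pi.mulSingle i g) ∈ rootsOfUnity M K := by
      rw [mem_rootsOfUnity, ← map_pow, ← Pi.mulSingle_pow]
      have : g ^ M = 1 := Subtype.ext ((mem_rootsOfUnity _ _).mp g.2)
      rw [this]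
      simp
    obtain ⟨k, hk⟩ := hpow ⟨_, hr⟩
    exact ⟨k, by simpa using congrArg Subtype.val hk⟩
  choose c hc using hi
  have key : ∀ ζ : ι → rootsOfUnity M K, ∏ i, ((ζ i : Kˣ)) ^ c i = ψ ζ := by
    intro ζ
    conv_rhs => rw [← Finset.univ_prod_mulSingle ζ]
    rw [map_prod]
    refine Finset.prod_congr rfl fun i _ => ?_
    obtain ⟨k, hk⟩ := hpow (ζ i)
    rw [← hk, Pi.mulSingle_pow, map_pow, ← hc]
    simp only [SubgroupClass.coe_pow]
    rw [← pow_mul, ← pow_mul, mul_comm]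
  refine ⟨c, fun ζ hζ => ?_, ?_⟩
  · rw [key]
    have : QuotientGroup.mk' H ζ = 1 := by simpa using hζ
    show φ (QuotientGroup.mk' H ζ) = 1
    rw [this, map_one]
  · rw [key]
    exact hφ

end Desc
end BadFields

namespace BadFields
set_option linter.unusedSectionVars false
section Tor
variable {K : Type} [Field K] {ι κ : Type} [Fintype ι] [Fintype κ] [IsAlgClosed K] [CharZero K]

lemma closed_single (b : κ → Kˣ) : IsZClosed K {y : κ → Kˣ | y = b} := by
  refine ⟨Set.range fun i => MvPolynomial.X i - MvPolynomial.C (b i : K), ?_⟩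
  ext y
  constructor
  · rintro rfl p ⟨i, rfl⟩
    simp
  · intro h
    funext i
    have := h _ ⟨i, rfl⟩
    simp only [map_sub, MvPolynomial.eval_X, MvPolynomial.eval_C, sub_eq_zero] at this
    exact Units.ext this

lemma closed_level {φ : (ι → Kˣ) → (κ → Kˣ)} (h : RegMap φ) (b : κ → Kˣ) :
    IsZClosed K {x | φ x = b} := h.preimage (closed_single b)

/-- characters -/
def chr (c : ι → ℤ) (x : ι → Kˣ) : Kˣ := ∏ i, x i ^ c i

lemma chr_reg (c : ι → ℤ) : RegFun (chr c : (ι → Kˣ) → Kˣ) :=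
  RegFun.prod _ fun i => (RegFun.coord i).zpow _

lemma closed_chr (c : ι → ℤ) (b : Kˣ) : IsZClosed K {x : ι → Kˣ | chr c x = b} := by
  have h : RegMap (fun (x : ι → Kˣ) (_ : Fin 1) => chr c x) := fun _ => chr_reg c
  have h2 := closed_level h (fun _ => b)
  convert h2 using 1
  ext x
  simp only [Set.mem_ofPred_eq]
  exact ⟨fun hx => funext fun _ => hx, fun hx => congrFun hx 0⟩

lemma chr_mul (c : ι → ℤ) (x y : ι → Kˣ) : chr c (x * y) = chr c x * chr c y := by
  simp [chr, mul_zpow, Finset.prod_mul_distrib]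

lemma zpow_sum' {G α : Type} [CommGroup G] (s : Finset α) (a : G) (f : α → ℤ) :
    a ^ (∑ i ∈ s, f i) = ∏ i ∈ s, a ^ f i := by
  classical
  induction s using Finset.induction_on with
  | empty => simp
  | insert b s hb ih => rw [Finset.sum_insert hb, Finset.prod_insert hb, zpow_add, ih]

lemma subtorus_chr (c u : ι → ℤ) (h : ∑ i, c i * u i = 1) :
    IsSubtorus K {x : ι → Kˣ | chr c x = 1} := by
  refine ⟨⟨1, fun _ i => c i, ?_⟩, ?_⟩
  · ext x
    simp only [Set.mem_ofPred_eq]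
    exact ⟨fun hx => funext fun _ => hx, fun hx => congrFun hx 0⟩
  · let φ : (ι → Kˣ) → (ι → Kˣ) := fun x i => x i * (chr c x) ^ (-u i)
    have hφ : RegMap φ := fun i => (RegFun.coord i).mul ((chr_reg c).zpow _)
    have him : φ '' Set.univ = {x : ι → Kˣ | chr c x = 1} := by
      ext x
      constructor
      · rintro ⟨y, -, rfl⟩
        have e : φ y = y * fun i => (chr c y) ^ (-u i) := rfl
        show chr c (φ y) = 1
        rw [e, chr_mul]
        have : chr c (fun i => (chr c y) ^ (-u i)) = (chr c y) ^ (-1 : ℤ) := by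
          conv_lhs => rw [chr]
          simp_rw [← zpow_mul]
          rw [← h, ← Finset.sum_neg_distrib, zpow_sum']
          exact Finset.prod_congr rfl fun i _ => by congr 1; ring
        rw [this]
        simp
      · intro hx
        refine ⟨x, trivial, funext fun i => ?_⟩
        have hx : chr c x = 1 := hx
        simp [φ, hx]
    rw [← him]
    exact irred_univ.image hφ (by rw [him]; exact closed_chr c 1)

lemma free_chr {V : Set (ι → Kˣ)} (hV : IsIrredVar K V) (hf : IsFree K V) (c : ι → ℤ) (hc : c ≠ 0)
    (a : Kˣ) : ¬ ∀ x ∈ V, chr c x = a := by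
  classical
  intro hall
  obtain ⟨i0, hi0⟩ := Function.ne_iff.mp hc
  obtain ⟨c', h1, h2⟩ := Finset.extract_gcd (s := Finset.univ) c ⟨i0, Finset.mem_univ _⟩
  obtain ⟨u, hu⟩ := Finset.gcd_eq_sum_mul Finset.univ c'
  rw [h2] at hu
  set d := Finset.univ.gcd c with hd
  have hd0 : d ≠ 0 := fun h => hi0 (by rw [h1 i0 (Finset.mem_univ _), h, zero_mul]; rfl)
  have hsub := subtorus_chr (K := K) c' u hu.symm
  set D := d.natAbs with hD
  have hD0 : D ≠ 0 := Int.natAbs_ne_zero.mpr hd0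
  have : NeZero D := ⟨hD0⟩
  have hpow : ∀ x ∈ V, ∀ y ∈ V, (chr c' x * (chr c' y)⁻¹) ^ D = 1 := by
    intro x hx y hy
    have e : ∀ z : ι → Kˣ, chr c z = chr c' z ^ d := by
      intro z
      simp only [chr]
      rw [← Finset.prod_zpow]
      exact Finset.prod_congr rfl fun i _ => by
        rw [h1 i (Finset.mem_univ _), mul_comm, zpow_mul]
    have h3 : (chr c' x * (chr c' y)⁻¹) ^ d = 1 := by
      rw [mul_zpow, inv_zpow, ← e, ← e, hall x hx, hall y hy, mul_inv_cancel]
    exact pow_natAbs_eq_one.mpr h3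
  obtain ⟨y, hy⟩ := hV.2.1
  obtain ⟨ω, -, hω⟩ := irred_biUnion hV (Finset.univ : Finset (rootsOfUnity D K))
    (fun ω => {x | chr c' x = ω * chr c' y}) (fun ω _ => closed_chr _ _) (by
      intro x hx
      simp only [Finset.mem_univ, Set.iUnion_true, Set.mem_iUnion]
      exact ⟨⟨chr c' x * (chr c' y)⁻¹, (mem_rootsOfUnity _ _).mpr (hpow x hx y hy)⟩, by simp⟩)
  refine hf ⟨_, y, hsub, ?_, ?_⟩
  · intro huniv
    have hc' : c' i0 ≠ 0 := fun h => hi0 (by rw [h1 i0 (Finset.mem_univ _), h, mul_zero]; rfl)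
    have h2 : (2 : K) ≠ 0 := two_ne_zero
    have : (Pi.mulSingle i0 (Units.mk0 (2 : K) h2) : ι → Kˣ) ∈ {x : ι → Kˣ | chr c' x = 1} := by
      rw [huniv]; trivial
    have h3 : (Units.mk0 (2 : K) h2) ^ c' i0 = 1 := by
      have h4 : chr c' (Pi.mulSingle i0 (Units.mk0 (2 : K) h2)) = 1 := this
      rw [chr, Finset.prod_eq_single i0] at h4
      · simpa using h4
      · intro j _ hj
        simp [Pi.mulSingle_eq_of_ne hj]
      · simp
    have h4 : (Units.mk0 (2 : K) h2) ^ (c' i0).natAbs = 1 := pow_natAbs_eq_one.mpr h3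
    have h5 : (2 : K) ^ (c' i0).natAbs = 1 := by simpa using congrArg Units.val h4
    have h6 : 2 ^ (c' i0).natAbs = 1 := by exact_mod_cast h5
    simp at h6
    exact hc' h6
  · intro x hx
    refine ⟨y⁻¹ * x, ?_, by simp⟩
    have e1 : chr c' x = ω * chr c' y := hω hx
    have e2 : chr c' y = ω * chr c' y := hω hy
    have e3 : chr c' (y⁻¹ * x) * chr c' y = chr c' y := by
      rw [← chr_mul]
      rw [show y⁻¹ * x * y = x by rw [mul_comm, mul_inv_cancel_left], e1, ← e2]
    simpa using e3

/-! dimension -/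

lemma chain_le {n d : ℕ} (W : Fin (d + 1) → Set (Fin n → Kˣ)) (h : ∀ i, IsIrredVar K (W i))
    (hW : StrictMono W) : d ≤ n := by
  let P : Fin (d + 1) → PrimeSpectrum (MvPolynomial (Fin n) K) := fun i => ⟨vI (W i.rev), (h _).vI_prime⟩
  have hP : StrictMono P := by
    intro i j hij
    have h1 : W j.rev < W i.rev := hW (Fin.rev_lt_rev.mpr hij)
    have h2 : vI (W i.rev) ≤ vI (W j.rev) := vI_anti h1.1
    refine lt_of_le_not_ge h2 fun h3 => h1.2 (subset_of_vI_le (h _).1 h3)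
  have := Order.LTSeries.length_le_krullDim (LTSeries.mk d P hP)
  have h2 := MvPolynomial.ringKrullDim_of_isNoetherianRing (R := K) (ι := Fin n)
  rw [ringKrullDim_eq_zero_of_field, zero_add, Nat.card_fin] at h2
  rw [ringKrullDim] at h2
  rw [h2] at this
  exact_mod_cast this

lemma exists_chain (n : ℕ) : ∃ W : Fin (n + 1) → Set (Fin n → Kˣ),
    (∀ i, IsIrredVar K (W i)) ∧ StrictMono W := by
  classical
  let φ : Fin (n + 1) → (Fin n → Kˣ) → (Fin n → Kˣ) := fun k x i => if (i : ℕ) < k then x i else 1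
  have hφ : ∀ k, RegMap (φ k) := by
    intro k i
    by_cases h : (i : ℕ) < k
    · simpa [φ, h] using RegFun.coord i
    · simpa [φ, h] using RegFun.const 1
  have himg : ∀ k, φ k '' Set.univ = {x | ∀ i : Fin n, (k : ℕ) ≤ i → x i = 1} := by
    intro k
    ext x
    constructor
    · rintro ⟨y, -, rfl⟩ i hi
      simp [φ, Nat.not_lt.mpr hi]
    · intro hx
      refine ⟨x, trivial, funext fun i => ?_⟩
      by_cases h : (i : ℕ) < k
      · simp [φ, h]
      · simp [φ, h, hx i (Nat.not_lt.mp h)]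
  refine ⟨fun k => φ k '' Set.univ, fun k => irred_univ.image (hφ k) ?_, ?_⟩
  · rw [himg]
    have hr : RegMap (fun (x : Fin n → Kˣ) (i : Fin n) => if (k : ℕ) ≤ i then x i else 1) := by
      intro i
      by_cases h : (k : ℕ) ≤ i
      · simpa [h] using RegFun.coord i
      · simpa [h] using RegFun.const 1
    convert closed_level hr 1 using 1
    ext x
    simp [funext_iff]
  · intro k l hkl
    simp only [himg]
    have hkl' : (k : ℕ) < l := hkl
    refine ⟨fun x hx i hi => hx i (hkl'.le.trans hi), fun hsub => ?_⟩
    have hkn : (k : ℕ) < n := by have := l.2; omega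
    have h2 : (2 : K) ≠ 0 := two_ne_zero
    have := hsub (show (fun i : Fin n => if (i : ℕ) = k then Units.mk0 (2 : K) h2 else 1) ∈ _ by
      intro i hi
      have : (i : ℕ) ≠ k := by omega
      simp [this]) ⟨k, hkn⟩ le_rfl
    simp only [if_true] at this
    have h3 := congrArg Units.val this
    simp at h3

lemma corrTorus (n N : ℕ) (hN : 1 ≤ N) :
    IsCorrTorus K {p : (Fin n ⊕ Fin n) → Kˣ | ∀ i, p (Sum.inr i) = p (Sum.inl i) ^ N} := by
  classical
  set T : Set ((Fin n ⊕ Fin n) → Kˣ) := {p | ∀ i, p (Sum.inr i) = p (Sum.inl i) ^ N} with hT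
  let g : (Fin n → Kˣ) → (Fin n ⊕ Fin n → Kˣ) := fun x => Sum.elim x (pw N x)
  let π : (Fin n ⊕ Fin n → Kˣ) → (Fin n → Kˣ) := fun p => p ∘ Sum.inl
  have hg : RegMap g := by
    rintro (i | i)
    · exact RegFun.coord i
    · exact (RegFun.coord i).pow N
  have hπ : RegMap π := fun i => RegFun.coord (Sum.inl i)
  have hπg : ∀ x, π (g x) = x := fun x => rfl
  have hgT : ∀ x, g x ∈ T := fun x i => rfl
  have hgπ : ∀ p ∈ T, g (π p) = p := by
    intro p hp
    funext j
    rcases j with i | i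
    · rfl
    · exact (hp i).symm
  have halg : IsAlgSubgroup K T := by
    let A : Matrix (Fin n) (Fin n ⊕ Fin n) ℤ := Matrix.of fun j =>
      Sum.elim (fun i => if i = j then (N : ℤ) else 0) (fun i => if i = j then -1 else 0)
    refine ⟨n, A, ?_⟩
    have e : ∀ (j : Fin n) (a : ℤ) (y : Fin n → Kˣ), ∏ i, y i ^ (if i = j then a else 0) = y j ^ a := by
      intro j a y
      rw [Finset.prod_eq_single j]
      · simp
      · intro b _ hb
        simp [hb]
      · simp
    have e2 : ∀ p : Fin n ⊕ Fin n → Kˣ, mpow K A p = fun j => p (Sum.inl j) ^ N * (p (Sum.inr j))⁻¹ := by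
      intro p
      funext j
      simp only [mpow]
      rw [Fintype.prod_sum_type]
      simp only [A, Matrix.of_apply, Sum.elim_inl, Sum.elim_inr]
      rw [e j N (fun i => p (Sum.inl i)), e j (-1) (fun i => p (Sum.inr i))]
      simp
    ext p
    simp only [hT, Set.mem_ofPred_eq, e2, funext_iff, Pi.one_apply, mul_inv_eq_one]
    exact ⟨fun h i => (h i).symm, fun h i => (h i).symm⟩
  have hTcl : IsZClosed K T := by
    obtain ⟨k, M, hM⟩ := halg
    rw [hM]
    exact closed_level (fun j => RegFun.prod _ fun i => (RegFun.coord i).zpow _) 1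
  have himg : ∀ C : Set (Fin n → Kˣ), g '' C = T ∩ π ⁻¹' C := by
    intro C
    ext p
    constructor
    · rintro ⟨x, hx, rfl⟩
      exact ⟨hgT x, hx⟩
    · rintro ⟨h1, h2⟩
      exact ⟨π p, h2, hgπ p h1⟩
  have hgirr : ∀ C, IsIrredVar K C → IsIrredVar K (g '' C) := fun C hC =>
    hC.image hg (by rw [himg]; exact hTcl.sInter (hπ.preimage hC.1))
  have hirr : IsIrredVar K T := by
    have := hgirr _ irred_univ
    rw [himg] at this
    simpa using this
  refine ⟨⟨halg, hirr⟩, ?_, fun x => ⟨pw N x, hgT x⟩, fun y => ?_⟩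
  · apply IsGreatest.csSup_eq
    constructor
    · obtain ⟨W, h1, h2⟩ := exists_chain (K := K) n
      refine ⟨fun i => g '' W i, fun i => ⟨hgirr _ (h1 i), ?_⟩, fun i j hij => ?_⟩
      · rintro _ ⟨x, -, rfl⟩
        exact hgT x
      · have h3 := h2 hij
        refine ⟨Set.image_mono h3.1, fun h4 => h3.2 fun x hx => ?_⟩
        obtain ⟨y, hy, hyx⟩ := h4 ⟨x, hx, rfl⟩
        rwa [← hπg x, ← hyx, hπg]
    · rintro d ⟨W, h1, h2⟩
      have e : ∀ i, π '' W i = g ⁻¹' W i := by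
        intro i
        ext x
        constructor
        · rintro ⟨p, hp, rfl⟩
          rw [Set.mem_preimage, hgπ p ((h1 i).2 hp)]
          exact hp
        · intro hx
          exact ⟨_, hx, rfl⟩
      refine chain_le (fun i => π '' W i) (fun i => (h1 i).1.image hπ
        (by rw [e]; exact hg.preimage (h1 i).1.1)) fun i j hij => ?_
      have h3 := h2 hij
      refine ⟨Set.image_mono h3.1, fun h4 => h3.2 fun p hp => ?_⟩
      have h5 : π p ∈ π '' W i := h4 ⟨p, hp, rfl⟩
      rw [e, Set.mem_preimage, hgπ p ((h1 j).2 hp)] at h5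
      exact h5
  · obtain ⟨x, hx⟩ := pw_surj N (by omega) y
    exact ⟨x, fun i => (congrFun hx i).symm⟩

lemma toricCorr_pw {n N : ℕ} {V V' : Set (Fin n → Kˣ)} (hV : IsZClosed K V) (hV' : IsZClosed K V')
    (h : pw N '' V' = V) :
    ToricCorr K {p : (Fin n ⊕ Fin n) → Kˣ | ∀ i, p (Sum.inr i) = p (Sum.inl i) ^ N} V' V := by
  constructor
  · convert zcl_of_closed hV'
    ext x
    constructor
    · rintro ⟨p, ⟨-, hp, -⟩, rfl⟩
      exact hp
    · intro hx
      exact ⟨Sum.elim x (pw N x), ⟨fun i => rfl, hx, h ▸ ⟨x, hx, rfl⟩⟩, rfl⟩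
  · convert zcl_of_closed hV
    ext y
    constructor
    · rintro ⟨p, ⟨-, -, hp⟩, rfl⟩
      exact hp
    · intro hy
      obtain ⟨x, hx, rfl⟩ := h ▸ hy
      exact ⟨Sum.elim x (pw N x), ⟨fun i => rfl, hx, hy⟩, rfl⟩
end Tor
end BadFields

namespace BadFields
set_option linter.unusedSectionVars false

lemma exists_N_abs {F : Type} [Field F] {n : ℕ} (y : Fin n → Fˣ)
    (h : ∀ c : Fin n → ℤ, c ≠ 0 → ∃ v : Fˣ →* Multiplicative ℤ, v (∏ i, y i ^ c i) ≠ 1) :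
    ∃ N : ℕ, 1 ≤ N ∧ ∀ (M : ℕ) (c : Fin n → ℤ) (g : Fˣ), ∏ i, y i ^ c i = g ^ M →
      ∀ i, (M : ℤ) ∣ N * c i := by
  classical
  let Φ : Additive (Fˣ →* Multiplicative ℤ) →+ (Fin n → ℤ) :=
    { toFun := fun v i => (Additive.toMul v (y i)).toAdd
      map_zero' := by funext i; simp
      map_add' := by intro v w; funext i; simp }
  have hΦ : ∀ v i, Φ v i = (Additive.toMul v (y i)).toAdd := fun v i => rfl
  have hval : ∀ (v : Additive (Fˣ →* Multiplicative ℤ)) (c : Fin n → ℤ),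
      (Additive.toMul v (∏ i, y i ^ c i)).toAdd = ∑ i, c i * Φ v i := by
    intro v c
    rw [map_prod, toAdd_prod]
    refine Finset.sum_congr rfl fun i _ => ?_
    rw [map_zpow, toAdd_zpow, hΦ, smul_eq_mul]
  let L : Submodule ℤ (Fin n → ℤ) := AddSubgroup.toIntSubmodule Φ.range
  have hL : ∀ w, w ∈ L ↔ ∃ v, Φ v = w := fun w => Iff.rfl
  have key : ∀ i, ∃ a : ℤ, a ≠ 0 ∧ a • (Pi.single i 1 : Fin n → ℤ) ∈ L := by
    intro i
    by_contra! hcon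
    let q : (Fin n → ℤ) →ₗ[ℤ] ((Fin n → ℤ) ⧸ L) := L.mkQ
    let t : ((Fin n → ℤ) ⧸ L) →ₗ[ℤ] _ := (Submodule.torsion ℤ ((Fin n → ℤ) ⧸ L)).mkQ
    have hne : t (q (Pi.single i 1)) ≠ 0 := by
      intro h0
      rw [Submodule.mkQ_apply, Submodule.Quotient.mk_eq_zero, Submodule.mem_torsion_iff] at h0
      obtain ⟨a, ha⟩ := h0
      refine hcon a (nonZeroDivisors.coe_ne_zero a) ?_
      rw [← Submodule.Quotient.mk_eq_zero]
      exact ha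
    have : Module.Free ℤ (((Fin n → ℤ) ⧸ L) ⧸ Submodule.torsion ℤ ((Fin n → ℤ) ⧸ L)) :=
      Module.free_of_finite_type_torsion_free'
    have hex : ∃ f : Module.Dual ℤ (((Fin n → ℤ) ⧸ L) ⧸ Submodule.torsion ℤ ((Fin n → ℤ) ⧸ L)),
        f (t (q (Pi.single i 1))) ≠ 0 := by
      by_contra! hc
      exact hne ((Module.forall_dual_apply_eq_zero_iff ℤ _).mp hc)
    obtain ⟨f, hf⟩ := hex
    let F' : (Fin n → ℤ) →ₗ[ℤ] ℤ := f ∘ₗ t ∘ₗ q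
    have hF : ∀ w, F' w = ∑ j, F' (Pi.single j 1) * w j := by
      intro w
      conv_lhs => rw [pi_eq_sum_univ' w]
      rw [map_sum]
      refine Finset.sum_congr rfl fun j _ => ?_
      rw [map_smul, smul_eq_mul, mul_comm]
    obtain ⟨v, hv⟩ := h (fun j => F' (Pi.single j 1)) (fun h0 => hf (congrFun h0 i))
    apply hv
    have h1 := hval (Additive.ofMul v) (fun j => F' (Pi.single j 1))
    rw [← hF] at h1
    have h2 : F' (Φ (Additive.ofMul v)) = 0 := by
      have : q (Φ (Additive.ofMul v)) = 0 := by
        rw [Submodule.mkQ_apply, Submodule.Quotient.mk_eq_zero]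
        exact ⟨_, rfl⟩
      show f (t (q _)) = 0
      rw [this, map_zero, map_zero]
    rw [h2] at h1
    exact Multiplicative.toAdd.injective h1
  choose a ha0 ha using key
  refine ⟨∏ i, (a i).natAbs, ?_, ?_⟩
  · exact Nat.one_le_iff_ne_zero.mpr (Finset.prod_ne_zero_iff.mpr fun i _ => Int.natAbs_ne_zero.mpr (ha0 i))
  · intro M c g hg i
    obtain ⟨v, hv⟩ := (hL _).mp (ha i)
    have h1 := hval v c
    rw [hg, hv, map_pow, toAdd_pow] at h1
    have h2 : (M : ℤ) ∣ a i * c i := by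
      refine ⟨(Additive.toMul v g).toAdd, ?_⟩
      rw [Finset.sum_eq_single i] at h1
      · simp at h1
        rw [h1]; ring
      · intro j _ hj
        simp [hj]
      · simp
    have h3 : (a i) ∣ ((∏ i, (a i).natAbs : ℕ) : ℤ) := by
      rw [← Int.natAbs_dvd]
      exact_mod_cast Finset.dvd_prod_of_mem _ (Finset.mem_univ i)
    exact h2.trans (mul_dvd_mul_right h3 _)

section FF
variable {K : Type} [Field K] [IsAlgClosed K] [CharZero K]

lemma exists_N {n : ℕ} {V : Set (Fin n → Kˣ)} (hV : IsIrredVar K V) (hf : IsFree K V) :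
    ∃ N : ℕ, 1 ≤ N ∧ ∀ (M : ℕ), M ≠ 0 → ∀ (c : Fin n → ℕ) (U Q : MvPolynomial (Fin n) K),
      U ∉ vI V → mon c * U ^ M - Q ^ M ∈ vI V → ∀ i, M ∣ N * c i := by
  classical
  have := hV.vI_prime
  let A := MvPolynomial (Fin n) K ⧸ vI V
  let F := FractionRing A
  let θ : MvPolynomial (Fin n) K →ₐ[K] F :=
    (IsScalarTower.toAlgHom K A F).comp (Ideal.Quotient.mkₐ K (vI V))
  have hθ : ∀ p, θ p = 0 ↔ p ∈ vI V := by
    intro p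
    show algebraMap A F (Ideal.Quotient.mk (vI V) p) = 0 ↔ _
    rw [map_eq_zero_iff _ (IsFractionRing.injective A F), Ideal.Quotient.eq_zero_iff_mem]
  have hX : ∀ i, θ (MvPolynomial.X i) ≠ 0 := by
    intro i h0
    rw [hθ] at h0
    obtain ⟨x, hx⟩ := hV.2.1
    have := h0 x hx
    simp [ev] at this
  let y : Fin n → Fˣ := fun i => Units.mk0 _ (hX i)
  have hmon : ∀ c : Fin n → ℕ, θ (mon c) = ((∏ i, y i ^ c i : Fˣ) : F) := by
    intro c
    have : (mon c : MvPolynomial (Fin n) K) = ∏ i, MvPolynomial.X i ^ c i := by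
      rw [mon, MvPolynomial.monomial_eq, Finsupp.prod_fintype]
      · simp
      · simp
    rw [this, map_prod]
    simp [y]
  have hFt : Algebra.EssFiniteType K F := inferInstance
  obtain ⟨N, hN, h⟩ := exists_N_abs y (by
    intro c hc
    have htr : Transcendental K (((∏ i, y i ^ c i : Fˣ)) : F) := by
      intro halg
      have hint : IsIntegral K (((∏ i, y i ^ c i : Fˣ)) : F) := halg.isIntegral
      obtain ⟨a, ha⟩ := minpoly.mem_range_of_degree_eq_one K _
        (IsAlgClosed.degree_eq_one_of_irreducible K (minpoly.irreducible hint))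
      have ha0 : a ≠ 0 := by
        rintro rfl
        rw [map_zero] at ha
        exact Units.ne_zero _ ha.symm
      refine free_chr hV hf c hc (Units.mk0 a ha0) ?_
      have hmem : mon (fun i => (c i).toNat) - MvPolynomial.C a * mon (fun i => (-c i).toNat) ∈ vI V := by
        rw [← hθ, map_sub, map_mul, hmon, hmon, sub_eq_zero]
        have : θ (MvPolynomial.C a) = algebraMap K F a := θ.commutes a
        rw [this, ha, ← Units.val_mul, ← Finset.prod_mul_distrib]
        congr 1
        refine Finset.prod_congr rfl fun i _ => ?_
        rw [← zpow_natCast, ← zpow_natCast, ← zpow_add]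
        congr 1
        omega
      intro x hx
      have h1 := hmem x hx
      have h2 : ev x (mon (fun i => (c i).toNat) - MvPolynomial.C a * mon (fun i => (-c i).toNat)) =
          ev x (mon (fun i => (c i).toNat)) - a * ev x (mon (fun i => (-c i).toNat)) := by simp [ev]
      rw [h2, ev_mon, ev_mon, sub_eq_zero] at h1
      have h3 : (∏ i, x i ^ (c i).toNat : Kˣ) = Units.mk0 a ha0 * ∏ i, x i ^ (-c i).toNat := by
        apply Units.ext
        simpa using h1
      rw [← mul_inv_eq_iff_eq_mul] at h3
      rw [← h3, chr, ← Finset.prod_inv_distrib, ← Finset.prod_mul_distrib]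
      refine Finset.prod_congr rfl fun i _ => ?_
      rw [← zpow_natCast, ← zpow_natCast, ← zpow_neg, ← zpow_add]
      congr 1
      omega
    obtain ⟨v, hv⟩ := exists_val _ htr
    exact ⟨v, hv _ rfl⟩)
  refine ⟨N, hN, fun M hM c U Q hU hUQ i => ?_⟩
  rw [← hθ] at hU
  rw [← hθ, map_sub, map_mul, map_pow, map_pow, hmon, sub_eq_zero] at hUQ
  have hQ : θ Q ≠ 0 := by
    intro h0
    rw [h0, zero_pow hM] at hUQ
    exact mul_ne_zero (Units.ne_zero _) (pow_ne_zero M hU) hUQ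
  have := h M (fun i => c i) (Units.mk0 _ hQ * (Units.mk0 _ hU)⁻¹) (by
    rw [mul_pow, inv_pow, eq_mul_inv_iff_mul_eq]
    apply Units.ext
    simp only [zpow_natCast]
    simpa using hUQ) i
  exact_mod_cast this

end FF
end BadFields

namespace BadFields
section Fin1
variable {K : Type} [Field K] [IsAlgClosed K] [CharZero K]

lemma kummer_of_N {n : ℕ} {V V' : Set (Fin n → Kˣ)} (N : ℕ) [NeZero N]
    (hN : ∀ (M : ℕ), M ≠ 0 → ∀ (c : Fin n → ℕ) (U Q : MvPolynomial (Fin n) K),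
      U ∉ vI V → mon c * U ^ M - Q ^ M ∈ vI V → ∀ i, M ∣ N * c i)
    (hV' : IsIrredVar K V') (him : pw N '' V' = V) : KummerGeneric K V' := by
  refine ⟨hV', fun m hm => ?_⟩
  have : NeZero m := ⟨by omega⟩
  obtain ⟨W, hW, hWV⟩ := exists_irred_over m hV'
  have hWM : pw (m * N) '' W = V := by
    rw [← him, ← hWV, Set.image_image]
    exact Set.image_congr fun x _ => pw_mul m N x
  have hst : ∀ ξ : Fin n → rootsOfUnity m K, tw ξ '' W = W := by
    intro ξ
    let ζ : Fin n → rootsOfUnity (m * N) K := fun i => ⟨ξ i, by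
      rw [mem_rootsOfUnity, pow_mul, (mem_rootsOfUnity _ _).mp (ξ i).2, one_pow]⟩
    have hζξ : ∀ x, tw ζ x = tw ξ x := fun x => rfl
    by_contra hne
    have hζ : ζ ∉ stab (m * N) W := fun h => hne h
    obtain ⟨c, hc1, hc2⟩ := duality (m * N) (stab (m * N) W) ζ hζ
    obtain ⟨U, Q, ⟨x0, hx0, hU⟩, hUQ⟩ := descent (m * N) hW c (fun η hη => by
      have := congrArg Units.val (hc1 η hη)
      simpa using this)
    have hd := hN (m * N) (NeZero.ne _) c U Q
      (fun h => hU (h _ (hWM ▸ ⟨x0, hx0, rfl⟩))) (by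
        intro y hy
        rw [← hWM] at hy
        obtain ⟨x, hx, rfl⟩ := hy
        have h1 := congrArg (fun z => z ^ (m * N)) (hUQ x hx)
        simp only [mul_pow] at h1
        have h2 : ev (pw (m * N) x) (mon c * U ^ (m * N) - Q ^ (m * N)) =
            ev (pw (m * N) x) (mon c) * ev (pw (m * N) x) U ^ (m * N) -
              ev (pw (m * N) x) Q ^ (m * N) := by simp [ev]
        rw [h2, ev_mon, ← h1, sub_eq_zero]
        congr 1
        rw [← Finset.prod_pow]
        refine Finset.prod_congr rfl fun i _ => ?_
        simp only [pw, Units.val_pow_eq_pow_val]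
        rw [← pow_mul, ← pow_mul, mul_comm])
    apply hc2
    refine Finset.prod_eq_one fun i _ => ?_
    have h3 := hd i
    rw [mul_comm m N] at h3
    obtain ⟨k, hk⟩ := Nat.dvd_of_mul_dvd_mul_left (Nat.pos_of_ne_zero (NeZero.ne N)) h3
    have h4 : ((ζ i : Kˣ)) ^ m = 1 := (mem_rootsOfUnity _ _).mp (ξ i).2
    rw [hk, pow_mul, h4, one_pow]
  have : mroot K m V' = W := by
    ext x
    constructor
    · intro hx
      have hx : pw m x ∈ V' := hx
      rw [← hWV] at hx
      obtain ⟨w, hw, hwx⟩ := hx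
      obtain ⟨ξ, rfl⟩ := pw_eq hwx
      rw [← hst ξ]
      exact ⟨w, hw, rfl⟩
    · intro hx
      show pw m x ∈ V'
      rw [← hWV]
      exact ⟨x, hx, rfl⟩
  rw [this]
  exact hW
end Fin1

/-- Every free irreducible variety is in toric correspondence with a Kummer
generic one; in fact for suitable `N ≥ 1` one may take any irreducible component of
`√[N]{V}` together with the graph of the `N`-th power map. -/
theorem free_toricCorr_kummerGeneric
    (K : Type) [Field K] [IsAlgClosed K] [CharZero K]
    {n : ℕ} (V : Set (Fin n → Kˣ)) (hVirr : IsIrredVar K V) (hVfree : IsFree K V) :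
    (∃ (V' : Set (Fin n → Kˣ)) (T : Set ((Fin n ⊕ Fin n) → Kˣ)),
      KummerGeneric K V' ∧ IsCorrTorus K T ∧ ToricCorr K T V' V) ∧
    ∃ N : ℕ, 1 ≤ N ∧
      IsCorrTorus K {p : (Fin n ⊕ Fin n) → Kˣ | ∀ i, p (Sum.inr i) = p (Sum.inl i) ^ N} ∧
      ∀ V' : Set (Fin n → Kˣ), IsIrredComponent K V' (mroot K N V) →
        KummerGeneric K V' ∧
        ToricCorr K {p : (Fin n ⊕ Fin n) → Kˣ | ∀ i, p (Sum.inr i) = p (Sum.inl i) ^ N}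
          V' V := by
  obtain ⟨N, hN1, hN⟩ := exists_N hVirr hVfree
  have hNZ : NeZero N := ⟨by omega⟩
  have main : ∀ V' : Set (Fin n → Kˣ), IsIrredComponent K V' (mroot K N V) →
        KummerGeneric K V' ∧
        ToricCorr K {p : (Fin n ⊕ Fin n) → Kˣ | ∀ i, p (Sum.inr i) = p (Sum.inl i) ^ N}
          V' V := by
    intro V' hV'
    have him := image_component N hVirr hV'
    exact ⟨kummer_of_N N hN hV'.1 him, toricCorr_pw hVirr.1 hV'.1.1 him⟩
  refine ⟨?_, N, hN1, corrTorus n N hN1, main⟩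
  obtain ⟨W, hW, hWV⟩ := exists_irred_over N hVirr
  obtain ⟨h1, h2⟩ := main W (component_of_over N hW hWV)
  exact ⟨W, _, h1, corrTorus n N hN1, h2⟩

end BadFields
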